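/- Let Y ∈ ℝ^{m×p} and 1 ≤ r ≤ m. Let X ∈ O_{m×r} satisfy the uniqueness conditions for (Y,r), and let Z be the unique minimizer of ‖Z − X‖_F² over H_{Y,r}. Then for every ε > 0 there exists δ > 0 such that for every X' ∈ O_{m×r} satisfying the uniqueness conditions for (Y,r) with ‖X' − X‖_F < δ, the unique minimizer Z' of ‖Z − X'‖_F² over H_{Y,r} satisfies ‖Z' − Z‖_F < ε. -/

import Mathlib

open Matrix BigOperators Filter

/-- The squared Frobenius norm of a real matrix. -/
def froSq {ι κ : Type*} [Fintype ι] [Fintype κ] (M : Matrix ι κ ℝ) : ℝ :=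
  ∑ i, ∑ j, (M i j) ^ 2

/-- The Frobenius norm of a real matrix. -/
noncomputable def fro {ι κ : Type*} [Fintype ι] [Fintype κ] (M : Matrix ι κ ℝ) : ℝ :=
  Real.sqrt (froSq M)

/-- The eigenvalues of `Y * Yᴴ`, sorted in descending order. -/
noncomputable def eigList {m : ℕ} {κ : Type*} [Fintype κ] (Y : Matrix (Fin m) κ ℝ) : List ℝ :=
  ((((Finset.univ : Finset (Fin m)).val.map
      (fun j => (Matrix.isHermitian_mul_conjTranspose_self Y).eigenvalues j)).sort (· ≤ ·)).reverse)

/-- The `i`-th largest singular value (1-indexed) of a real matrix, with the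
convention that it is `0` beyond the smaller matrix dimension. -/
noncomputable def sval {m : ℕ} {κ : Type*} [Fintype κ] (Y : Matrix (Fin m) κ ℝ) (i : ℕ) : ℝ :=
  Real.sqrt ((eigList Y).getD (i - 1) 0)

/-- The set of `m × r` real matrices with orthonormal columns. -/
def Stiefel (m r : ℕ) : Set (Matrix (Fin m) (Fin r) ℝ) :=
  {Z | Zᵀ * Z = 1}

/-- `H_{Y,r}`: the set of maximizers of `‖Zᵀ Y‖_F²` over the Stiefel manifold. -/
def HSet {m p : ℕ} (Y : Matrix (Fin m) (Fin p) ℝ) (r : ℕ) : Set (Matrix (Fin m) (Fin r) ℝ) :=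
  {Z | Z ∈ Stiefel m r ∧ ∀ W ∈ Stiefel m r, froSq (Wᵀ * Y) ≤ froSq (Zᵀ * Y)}

/-- The nuclear norm: the sum of all singular values. -/
noncomputable def nuclearNorm {a b : ℕ} (M : Matrix (Fin a) (Fin b) ℝ) : ℝ :=
  ∑ i ∈ Finset.range (min a b), sval M (i + 1)

/-- `U` maximizes `‖Uᵀ X‖_*` over `H_{Y,r}`. -/
def NucMax {m p r : ℕ} (Y : Matrix (Fin m) (Fin p) ℝ) (X U : Matrix (Fin m) (Fin r) ℝ) : Prop :=
  U ∈ HSet Y r ∧ ∀ V ∈ HSet Y r, nuclearNorm (Vᵀ * X) ≤ nuclearNorm (Uᵀ * X)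

/-- The uniqueness conditions for `(Y, r)` at `X`. -/
def UniqCond {m p : ℕ} (Y : Matrix (Fin m) (Fin p) ℝ) (r : ℕ)
    (X : Matrix (Fin m) (Fin r) ℝ) : Prop :=
  (∀ U, NucMax Y X U → (Uᵀ * X).det ≠ 0) ∧
  (∀ U₁ U₂, NucMax Y X U₁ → NucMax Y X U₂ → U₁ * U₁ᵀ = U₂ * U₂ᵀ)

/-- `Z` is a minimizer of `‖Z − X‖_F²` over `H_{Y,r}`. -/
def IsProj {m p r : ℕ} (Y : Matrix (Fin m) (Fin p) ℝ) (X Z : Matrix (Fin m) (Fin r) ℝ) : Prop :=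
  Z ∈ HSet Y r ∧ ∀ W ∈ HSet Y r, froSq (Z - X) ≤ froSq (W - X)

/-- The trace inner product of two matrices. -/
noncomputable def tinner {a b : ℕ} (A B : Matrix (Fin a) (Fin b) ℝ) : ℝ :=
  Matrix.trace (Aᵀ * B)

theorem froSq_eq_trace {ι κ : Type*} [Fintype ι] [Fintype κ] (M : Matrix ι κ ℝ) :
    froSq M = trace (Mᵀ * M) := by
  simp only [froSq, trace, diag, mul_apply, transpose_apply]
  rw [Finset.sum_comm]
  simp [pow_two]

theorem froSq_sub_stiefel {m r : ℕ} {Z : Matrix (Fin m) (Fin r) ℝ} (hZ : Z ∈ Stiefel m r)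
    (X : Matrix (Fin m) (Fin r) ℝ) :
    froSq (Z - X) = r - 2 * trace (Zᵀ * X) + froSq X := by
  have hZ' : Zᵀ * Z = 1 := hZ
  have h : trace (Xᵀ * Z) = trace (Zᵀ * X) := by
    rw [← trace_transpose (Xᵀ * Z)]; simp
  rw [froSq_eq_trace, froSq_eq_trace, transpose_sub, Matrix.sub_mul, Matrix.mul_sub, Matrix.mul_sub,
    hZ', trace_sub, trace_sub, trace_sub, h, trace_one]
  simp only [Fintype.card_fin]
  ring

theorem nuclearNorm_eq {r : ℕ} (M : Matrix (Fin r) (Fin r) ℝ) :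
    nuclearNorm M =
      ∑ j, Real.sqrt ((Matrix.isHermitian_mul_conjTranspose_self M).eigenvalues j) := by
  have hlen : (eigList M).length = r := by simp [eigList]
  have h1 : nuclearNorm M = ((eigList M).map Real.sqrt).sum := by
    have : nuclearNorm M = ∑ i ∈ Finset.range (eigList M).length,
        Real.sqrt ((eigList M).getD i 0) := by
      rw [hlen]; simp [nuclearNorm, sval]
    rw [this]
    generalize eigList M = l
    induction l with
    | nil => simp
    | cons a t ih =>
      rw [List.length_cons, Finset.sum_range_succ']
      simp only [List.getD_cons_succ, List.getD_cons_zero, List.map_cons, List.sum_cons]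
      rw [ih, add_comm]
  rw [h1, eigList, List.map_reverse, List.sum_reverse]
  rw [← Multiset.sum_coe, ← Multiset.map_coe, Multiset.sort_eq, Multiset.map_map]
  rfl

/-- Singular value decomposition of a square matrix. -/
theorem exists_svd {r : ℕ} (M : Matrix (Fin r) (Fin r) ℝ) :
    ∃ (E W : Matrix (Fin r) (Fin r) ℝ) (s : Fin r → ℝ),
      Eᵀ * E = 1 ∧ W * Wᵀ = 1 ∧ (∀ i, 0 ≤ s i) ∧ M = E * diagonal s * W ∧
      nuclearNorm M = ∑ i, s i := by
  set hH := Matrix.isHermitian_mul_conjTranspose_self M with hHdef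
  set d := hH.eigenvalues with hd
  have hd0 : ∀ i, 0 ≤ d i := (Matrix.posSemidef_self_mul_conjTranspose M).eigenvalues_nonneg
  let E : Matrix (Fin r) (Fin r) ℝ := (hH.eigenvectorUnitary : Matrix (Fin r) (Fin r) ℝ)
  have hE1 : Eᵀ * E = 1 := by
    have := (Matrix.mem_unitaryGroup_iff').1 hH.eigenvectorUnitary.2
    rwa [star_eq_conjTranspose, conjTranspose_eq_transpose_of_trivial] at this
  have hE2 : E * Eᵀ = 1 := mul_eq_one_comm.1 hE1
  have hspec : M * Mᵀ = E * diagonal d * Eᵀ := by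
    have := hH.spectral_theorem
    rw [Unitary.conjStarAlgAut_apply] at this
    rw [star_eq_conjTranspose] at this
    have hE' : Eᴴ = Eᵀ := conjTranspose_eq_transpose_of_trivial E
    have hM' : Mᴴ = Mᵀ := conjTranspose_eq_transpose_of_trivial M
    rw [← hE', ← hM']
    exact this
  let B := Eᵀ * M
  have hB : B * Bᵀ = diagonal d := by
    simp only [B, transpose_mul, transpose_transpose]
    calc Eᵀ * M * (Mᵀ * E) = Eᵀ * (M * Mᵀ) * E := by simp only [Matrix.mul_assoc]
      _ = (Eᵀ * E) * diagonal d * (Eᵀ * E) := by rw [hspec]; simp only [Matrix.mul_assoc]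
      _ = _ := by rw [hE1]; simp
  have hBij : ∀ i j, ∑ k, B i k * B j k = diagonal d i j := by
    intro i j; rw [← hB]; simp [mul_apply]
  let v : Fin r → EuclideanSpace ℝ (Fin r) :=
    fun i => WithLp.toLp 2 (fun k => (Real.sqrt (d i))⁻¹ * B i k)
  let S : Set (Fin r) := {i | d i ≠ 0}
  have hv : Orthonormal ℝ (S.domRestrict v) := by
    rw [orthonormal_iff_ite]
    rintro ⟨i, hi⟩ ⟨j, hj⟩
    have hin : inner ℝ (v i) (v j) =
        (Real.sqrt (d i))⁻¹ * (Real.sqrt (d j))⁻¹ * diagonal d i j := by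
      rw [← hBij, Finset.mul_sum]
      simp only [v, PiLp.inner_apply, RCLike.inner_apply, conj_trivial]
      refine Finset.sum_congr rfl fun k _ => by ring
    change inner ℝ (v i) (v j) = _
    rw [hin]
    simp only [Subtype.mk.injEq]
    split_ifs with h
    · subst h
      have hp : 0 < d i := lt_of_le_of_ne (hd0 i) (Ne.symm hi)
      rw [diagonal_apply_eq, ← mul_inv, Real.mul_self_sqrt hp.le, inv_mul_cancel₀ hp.ne']
    · rw [diagonal_apply_ne _ h, mul_zero]
  obtain ⟨b, hb⟩ := hv.exists_orthonormalBasis_extension_of_card_eq (by simp)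
  let W : Matrix (Fin r) (Fin r) ℝ := Matrix.of fun i k => b i k
  have hW : W * Wᵀ = 1 := by
    ext i j
    have := (orthonormal_iff_ite.1 b.orthonormal) i j
    simp only [PiLp.inner_apply, RCLike.inner_apply, conj_trivial] at this
    rw [one_apply, ← this]
    simp only [mul_apply, W, transpose_apply, of_apply]
    exact Finset.sum_congr rfl fun k _ => by ring
  refine ⟨E, W, fun i => Real.sqrt (d i), hE1, hW, fun i => Real.sqrt_nonneg _, ?_,
    nuclearNorm_eq M⟩
  have hBW : B = diagonal (fun i => Real.sqrt (d i)) * W := by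
    ext i k
    rw [diagonal_mul]
    by_cases hi : d i = 0
    · rw [hi, Real.sqrt_zero, zero_mul]
      have h0 := hBij i i
      rw [diagonal_apply_eq, hi, Finset.sum_eq_zero_iff_of_nonneg
        (fun k _ => mul_self_nonneg _)] at h0
      exact mul_self_eq_zero.1 (h0 k (Finset.mem_univ _))
    · have hp : 0 < Real.sqrt (d i) := Real.sqrt_pos.2 (lt_of_le_of_ne (hd0 i) (Ne.symm hi))
      simp only [W, of_apply, hb i hi, v]
      rw [← mul_assoc, mul_inv_cancel₀ hp.ne', one_mul]
  rw [Matrix.mul_assoc, ← hBW, ← Matrix.mul_assoc, hE2, Matrix.one_mul]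

theorem orth_row {r : ℕ} {Q : Matrix (Fin r) (Fin r) ℝ} (hQ : Q * Qᵀ = 1) (i : Fin r) :
    ∑ k, Q i k ^ 2 = 1 := by
  have := congrFun (congrFun hQ i) i
  simpa [mul_apply, pow_two] using this

theorem orth_entry_le {r : ℕ} {Q : Matrix (Fin r) (Fin r) ℝ} (hQ : Q * Qᵀ = 1) (i j : Fin r) :
    Q i j ≤ 1 := by
  have h := orth_row hQ i
  have := Finset.single_le_sum (f := fun k => Q i k ^ 2) (fun k _ => sq_nonneg _)
    (Finset.mem_univ j)
  have this : Q i j ^ 2 ≤ ∑ k, Q i k ^ 2 := this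
  nlinarith

theorem orth_eq_one {r : ℕ} {Q : Matrix (Fin r) (Fin r) ℝ} (hQ : Q * Qᵀ = 1)
    (h : ∀ i, Q i i = 1) : Q = 1 := by
  ext i j
  by_cases hij : i = j
  · subst hij; simp [h]
  · rw [one_apply_ne hij]
    have h1 := orth_row hQ i
    have h2 : Q i i ^ 2 + Q i j ^ 2 ≤ ∑ k, Q i k ^ 2 := by
      rw [← Finset.sum_pair (f := fun k => Q i k ^ 2) hij]
      exact Finset.sum_le_sum_of_subset_of_nonneg (Finset.subset_univ _)
        (fun k _ _ => sq_nonneg _)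
    rw [h1, h i] at h2
    nlinarith [sq_nonneg (Q i j)]

theorem trace_diag_mul {r : ℕ} (s : Fin r → ℝ) (Q : Matrix (Fin r) (Fin r) ℝ) :
    trace (diagonal s * Q) = ∑ i, s i * Q i i := by
  simp [trace, diagonal_mul]

theorem trace_le_nuclearNorm {r : ℕ} (M : Matrix (Fin r) (Fin r) ℝ) :
    trace M ≤ nuclearNorm M := by
  obtain ⟨E, W, s, hE, hW, hs, hM, hn⟩ := exists_svd M
  rw [hn, hM, Matrix.mul_assoc, trace_mul_comm, Matrix.mul_assoc, trace_diag_mul]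
  refine Finset.sum_le_sum fun i _ => ?_
  have hWE : (W * E) * (W * E)ᵀ = 1 := by
    rw [transpose_mul, Matrix.mul_assoc, ← Matrix.mul_assoc E, mul_eq_one_comm.1 hE,
      Matrix.one_mul, hW]
  have := orth_entry_le hWE i i
  nlinarith [hs i]

theorem exists_orth_trace {r : ℕ} (M : Matrix (Fin r) (Fin r) ℝ) :
    ∃ Q : Matrix (Fin r) (Fin r) ℝ, Qᵀ * Q = 1 ∧ trace (Qᵀ * M) = nuclearNorm M := by
  obtain ⟨E, W, s, hE, hW, hs, hM, hn⟩ := exists_svd M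
  refine ⟨E * W, ?_, ?_⟩
  · rw [transpose_mul, Matrix.mul_assoc, ← Matrix.mul_assoc Eᵀ, hE, Matrix.one_mul]
    exact mul_eq_one_comm.1 hW
  · rw [hn, hM, transpose_mul, Matrix.mul_assoc, ← Matrix.mul_assoc Eᵀ, ← Matrix.mul_assoc Eᵀ, hE,
      Matrix.one_mul, trace_mul_comm, Matrix.mul_assoc, hW, Matrix.mul_one, trace_diagonal]

theorem orth_unique {r : ℕ} (M Q : Matrix (Fin r) (Fin r) ℝ) (hdet : M.det ≠ 0)
    (hQ : Qᵀ * Q = 1) (h1 : trace M = nuclearNorm M) (h2 : trace (Qᵀ * M) = nuclearNorm M) :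
    Q = 1 := by
  obtain ⟨E, W, s, hE, hW, hs, hM, hn⟩ := exists_svd M
  have hspos : ∀ i, 0 < s i := by
    intro i
    refine lt_of_le_of_ne (hs i) fun h0 => hdet ?_
    rw [hM, det_mul, det_mul, det_diagonal, Finset.prod_eq_zero (Finset.mem_univ i) h0.symm]
    simp
  have key : ∀ P : Matrix (Fin r) (Fin r) ℝ, Pᵀ * P = 1 → trace (Pᵀ * M) = nuclearNorm M →
      W * (Pᵀ * E) = 1 := by
    intro P hP ht
    have hO : (W * (Pᵀ * E)) * (W * (Pᵀ * E))ᵀ = 1 := by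
      calc (W * (Pᵀ * E)) * (W * (Pᵀ * E))ᵀ = W * (Pᵀ * (E * Eᵀ) * P) * Wᵀ := by
            simp only [transpose_mul, transpose_transpose, Matrix.mul_assoc]
        _ = 1 := by rw [mul_eq_one_comm.1 hE, Matrix.mul_one, hP, Matrix.mul_one, hW]
    apply orth_eq_one hO
    have ht' : ∑ i, s i * (W * (Pᵀ * E)) i i = ∑ i, s i := by
      rw [← hn, ← ht, hM, ← trace_diag_mul]
      rw [← Matrix.mul_assoc, trace_mul_comm]
      simp only [Matrix.mul_assoc]
    have := (Finset.sum_eq_sum_iff_of_le (fun i _ =>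
      (by nlinarith [hs i, orth_entry_le hO i i] : s i * (W * (Pᵀ * E)) i i ≤ s i))).1 ht'
    intro i
    have h := this i (Finset.mem_univ i)
    have := hspos i
    exact mul_left_cancel₀ this.ne' (by rw [h, mul_one])
  have e1 := key 1 (by simp) (by simpa using h1)
  have e2 := key Q hQ h2
  rw [transpose_one, Matrix.one_mul] at e1
  have hE2 := mul_eq_one_comm.1 hE
  have hWW := mul_eq_one_comm.1 hW
  have : Qᵀ = 1 := by
    calc Qᵀ = (Wᵀ * W) * Qᵀ * (E * Eᵀ) := by rw [hWW, hE2]; simp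
      _ = Wᵀ * (W * (Qᵀ * E)) * Eᵀ := by simp only [Matrix.mul_assoc]
      _ = Wᵀ * (W * E) * Eᵀ := by rw [e2, e1]
      _ = (Wᵀ * W) * (E * Eᵀ) := by simp only [Matrix.mul_assoc]
      _ = 1 := by rw [hWW, hE2]; simp
  rw [← transpose_transpose Q, this, transpose_one]

theorem HSet_mul_orth {m p r : ℕ} {Y : Matrix (Fin m) (Fin p) ℝ} {V : Matrix (Fin m) (Fin r) ℝ}
    (hV : V ∈ HSet Y r) {Q : Matrix (Fin r) (Fin r) ℝ} (hQ : Qᵀ * Q = 1) : V * Q ∈ HSet Y r := by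
  obtain ⟨hS, hmax⟩ := hV
  have hS' : Vᵀ * V = 1 := hS
  refine ⟨?_, fun W hW => (hmax W hW).trans_eq ?_⟩
  · change (V * Q)ᵀ * (V * Q) = 1
    rw [transpose_mul, Matrix.mul_assoc, ← Matrix.mul_assoc Vᵀ, hS', Matrix.one_mul, hQ]
  · rw [froSq_eq_trace, froSq_eq_trace]
    congr 1
    calc (Vᵀ * Y)ᵀ * (Vᵀ * Y) = (Vᵀ * Y)ᵀ * (Q * Qᵀ) * (Vᵀ * Y) := by
          rw [mul_eq_one_comm.1 hQ, Matrix.mul_one]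
      _ = _ := by simp only [transpose_mul, transpose_transpose, Matrix.mul_assoc]

theorem IsProj.trace_le {m p r : ℕ} {Y : Matrix (Fin m) (Fin p) ℝ}
    {X Z : Matrix (Fin m) (Fin r) ℝ} (h : IsProj Y X Z) {V : Matrix (Fin m) (Fin r) ℝ}
    (hV : V ∈ HSet Y r) : trace (Vᵀ * X) ≤ trace (Zᵀ * X) := by
  have := h.2 V hV
  rw [froSq_sub_stiefel h.1.1, froSq_sub_stiefel hV.1] at this
  linarith

theorem IsProj.nuc_le {m p r : ℕ} {Y : Matrix (Fin m) (Fin p) ℝ}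
    {X Z : Matrix (Fin m) (Fin r) ℝ} (h : IsProj Y X Z) {V : Matrix (Fin m) (Fin r) ℝ}
    (hV : V ∈ HSet Y r) : nuclearNorm (Vᵀ * X) ≤ trace (Zᵀ * X) := by
  obtain ⟨Q, hQ, ht⟩ := exists_orth_trace (Vᵀ * X)
  have := h.trace_le (HSet_mul_orth hV hQ)
  rwa [transpose_mul, Matrix.mul_assoc, ht] at this

theorem IsProj.unique {m p r : ℕ} {Y : Matrix (Fin m) (Fin p) ℝ}
    {X Z Z' : Matrix (Fin m) (Fin r) ℝ} (hU : UniqCond Y r X)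
    (h : IsProj Y X Z) (h' : IsProj Y X Z') : Z' = Z := by
  have hN : NucMax Y X Z := ⟨h.1, fun V hV => (h.nuc_le hV).trans (trace_le_nuclearNorm _)⟩
  have hN' : NucMax Y X Z' := ⟨h'.1, fun V hV => (h'.nuc_le hV).trans (trace_le_nuclearNorm _)⟩
  have hP := hU.2 _ _ hN hN'
  have hdet := hU.1 _ hN
  have hZ : Zᵀ * Z = 1 := h.1.1
  have hZ' : Z'ᵀ * Z' = 1 := h'.1.1
  have ht : trace (Zᵀ * X) = nuclearNorm (Zᵀ * X) :=
    le_antisymm (trace_le_nuclearNorm _) (h.nuc_le h.1)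
  have htt : trace (Z'ᵀ * X) = trace (Zᵀ * X) :=
    le_antisymm (h.trace_le h'.1) (h'.trace_le h.1)
  have hZQ : Z * (Zᵀ * Z') = Z' := by
    rw [← Matrix.mul_assoc, hP, Matrix.mul_assoc, hZ', Matrix.mul_one]
  have hQ : (Zᵀ * Z')ᵀ * (Zᵀ * Z') = 1 := by
    rw [transpose_mul, transpose_transpose, Matrix.mul_assoc, hZQ, hZ']
  have := orth_unique (Zᵀ * X) (Zᵀ * Z') hdet hQ ht (by
    rw [← ht, ← htt, ← Matrix.mul_assoc, ← transpose_mul, hZQ])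
  rw [← hZQ, this, Matrix.mul_one]

theorem continuous_froSq {ι κ : Type*} [Fintype ι] [Fintype κ] :
    Continuous (froSq : Matrix ι κ ℝ → ℝ) := by
  unfold froSq
  fun_prop

theorem continuous_fro {ι κ : Type*} [Fintype ι] [Fintype κ] :
    Continuous (fro : Matrix ι κ ℝ → ℝ) :=
  Real.continuous_sqrt.comp continuous_froSq

theorem isCompact_HSet {m p : ℕ} (Y : Matrix (Fin m) (Fin p) ℝ) (r : ℕ) :
    IsCompact (HSet Y r) := by
  have hc : IsCompact (Set.univ.pi fun _ : Fin m => Set.univ.pi fun _ : Fin r =>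
      Set.Icc (-1 : ℝ) 1) := isCompact_univ_pi fun _ => isCompact_univ_pi fun _ => isCompact_Icc
  refine IsCompact.of_isClosed_subset (s := (Set.univ.pi fun _ : Fin m => Set.univ.pi
    fun _ : Fin r => Set.Icc (-1 : ℝ) 1 : Set (Matrix (Fin m) (Fin r) ℝ))) hc ?_ ?_
  · have h1 : IsClosed (Stiefel m r) :=
      isClosed_eq (f := fun Z : Matrix (Fin m) (Fin r) ℝ => Zᵀ * Z) (by fun_prop) continuous_const
    have h2 : HSet Y r = Stiefel m r ∩ ⋂ W ∈ Stiefel m r,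
        {Z | froSq (Wᵀ * Y) ≤ froSq (Zᵀ * Y)} := by
      ext Z; simp [HSet]
    rw [h2]
    refine h1.inter (isClosed_biInter fun W _ => isClosed_le continuous_const ?_)
    exact continuous_froSq.comp (by fun_prop)
  · intro (Z : Matrix (Fin m) (Fin r) ℝ) hZ i _ j _
    change Z i j ∈ Set.Icc (-1 : ℝ) 1
    have h : Zᵀ * Z = 1 := hZ.1
    have := congrFun (congrFun h j) j
    simp only [mul_apply, transpose_apply, one_apply_eq] at this
    have h2 := Finset.single_le_sum (f := fun k => Z k j * Z k j) (fun k _ => mul_self_nonneg _)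
      (Finset.mem_univ i)
    have h2 : Z i j * Z i j ≤ ∑ k, Z k j * Z k j := h2
    constructor <;> nlinarith

section
attribute [local instance] Matrix.frobeniusNormedAddCommGroup

theorem fro_eq_norm {m r : ℕ} (A : Matrix (Fin m) (Fin r) ℝ) : fro A = ‖A‖ := by
  rw [Matrix.frobenius_norm_def, fro, froSq, Real.sqrt_eq_rpow]
  simp

theorem fro_triangle {m r : ℕ} (A B C : Matrix (Fin m) (Fin r) ℝ) :
    fro (A - C) ≤ fro (A - B) + fro (B - C) := by
  simp only [fro_eq_norm]
  exact norm_sub_le_norm_sub_add_norm_sub A B C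

theorem fro_comm {m r : ℕ} (A B : Matrix (Fin m) (Fin r) ℝ) : fro (A - B) = fro (B - A) := by
  simp only [fro_eq_norm]
  exact norm_sub_rev A B

end

/-- Continuity of `T_{Y,r}` on the set of points satisfying the
uniqueness conditions. -/
theorem stmt4 {m p r : ℕ} (hr1 : 1 ≤ r) (hrm : r ≤ m)
    (Y : Matrix (Fin m) (Fin p) ℝ)
    (X : Matrix (Fin m) (Fin r) ℝ) (hX : X ∈ Stiefel m r) (hU : UniqCond Y r X)
    (Z : Matrix (Fin m) (Fin r) ℝ) (hZ : IsProj Y X Z) :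
    ∀ ε > (0 : ℝ), ∃ δ > (0 : ℝ), ∀ X' ∈ Stiefel m r, UniqCond Y r X' →
      fro (X' - X) < δ →
      ∀ Z' : Matrix (Fin m) (Fin r) ℝ, IsProj Y X' Z' → fro (Z' - Z) < ε := by
  intro ε hε
  have hKc : IsCompact (HSet Y r ∩ {W | ε ≤ fro (W - Z)}) :=
    (isCompact_HSet Y r).inter_right
      (isClosed_le continuous_const (continuous_fro.comp (continuous_id.sub continuous_const)))
  rcases Set.eq_empty_or_nonempty (HSet Y r ∩ {W | ε ≤ fro (W - Z)}) with hK | hK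
  · refine ⟨1, one_pos, fun X' _ _ _ Z' hZ' => ?_⟩
    by_contra hcon
    have : Z' ∈ HSet Y r ∩ {W | ε ≤ fro (W - Z)} := ⟨hZ'.1, not_lt.1 hcon⟩
    rw [hK] at this
    exact this
  · obtain ⟨W₀, hW₀, hmin⟩ := hKc.exists_isMinOn hK
      (f := fun W => fro (W - X))
      (continuous_fro.comp (continuous_id.sub continuous_const)).continuousOn
    have hlt : fro (Z - X) < fro (W₀ - X) := by
      by_contra hcon
      have h1 : froSq (W₀ - X) ≤ froSq (Z - X) := by
        have h0 : 0 ≤ froSq (Z - X) :=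
          Finset.sum_nonneg fun i _ => Finset.sum_nonneg fun j _ => sq_nonneg _
        exact (Real.sqrt_le_sqrt_iff h0).1 (not_lt.1 hcon)
      have h2 : IsProj Y X W₀ := ⟨hW₀.1, fun W hW => h1.trans (hZ.2 W hW)⟩
      have h3 := IsProj.unique hU hZ h2
      have h4 : ε ≤ fro (W₀ - Z) := hW₀.2
      rw [h3, sub_self] at h4
      simp [fro, froSq] at h4
      linarith
    refine ⟨(fro (W₀ - X) - fro (Z - X)) / 2, by linarith, fun X' _ _ hX' Z' hZ' => ?_⟩
    by_contra hcon
    have h1 : fro (W₀ - X) ≤ fro (Z' - X) := hmin ⟨hZ'.1, not_lt.1 hcon⟩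
    have h2 : fro (Z' - X') ≤ fro (Z - X') := Real.sqrt_le_sqrt (hZ'.2 Z hZ.1)
    have h3 := fro_triangle Z' X' X
    have h4 := fro_triangle Z X X'
    have h5 := fro_comm X X'
    linarith
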